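/- For |q| < 1: Σ_{n ≥ 0} q^{n^2} (-q;q^2)_n / (q^4;q^4)_n = ((-q;q^2)_∞ / (q^2;q^2)_∞) · (q^3;q^6)_∞^2 (q^6;q^6)_∞. -/

import Mathlib

/-- Finite q-Pochhammer symbol `(x;q)_n = ∏_{k=0}^{n-1} (1 - x q^k)`. -/
noncomputable def qPoch (x q : ℂ) (n : ℕ) : ℂ := ∏ k ∈ Finset.range n, (1 - x * q ^ k)

/-- Infinite q-Pochhammer symbol `(x;q)_∞ = ∏_{k≥0} (1 - x q^k)`. -/
noncomputable def qPochInf (x q : ℂ) : ℂ := ∏' k : ℕ, (1 - x * q ^ k)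

open Filter Topology

lemma one_sub_pow_ne {b : ℂ} (hb : ‖b‖ < 1) (n : ℕ) : 1 - b ^ (n + 1) ≠ 0 := by
  intro h
  have h1 : ‖b ^ (n + 1)‖ < 1 := by
    rw [norm_pow]; exact pow_lt_one₀ (norm_nonneg _) hb (by omega)
  rw [← sub_eq_zero.mp h] at h1
  simp at h1

lemma qPoch_succ (x b : ℂ) (n : ℕ) : qPoch x b (n + 1) = qPoch x b n * (1 - x * b ^ n) := by
  simp [qPoch, Finset.prod_range_succ]

lemma qPoch_self_succ (b : ℂ) (n : ℕ) :
    qPoch b b (n + 1) = qPoch b b n * (1 - b ^ (n + 1)) := by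
  rw [qPoch_succ, pow_succ']

lemma qPoch_self_ne {b : ℂ} (hb : ‖b‖ < 1) (n : ℕ) : qPoch b b n ≠ 0 := by
  induction n with
  | zero => simp [qPoch]
  | succ n ih => rw [qPoch_self_succ]; exact mul_ne_zero ih (one_sub_pow_ne hb n)

lemma qsummable (x : ℂ) {b : ℂ} (hb : ‖b‖ < 1) : Summable fun k : ℕ => ‖-(x * b ^ k)‖ := by
  simp only [norm_neg, norm_mul, norm_pow]
  exact (summable_geometric_of_lt_one (norm_nonneg _) hb).mul_left _

lemma qmult (x : ℂ) {b : ℂ} (hb : ‖b‖ < 1) : Multipliable fun k : ℕ => (1 - x * b ^ k) := by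
  simpa [sub_eq_add_neg] using multipliable_one_add_of_summable (qsummable x hb)

lemma qPoch_tendsto (x : ℂ) {b : ℂ} (hb : ‖b‖ < 1) :
    Tendsto (qPoch x b) atTop (𝓝 (qPochInf x b)) :=
  (qmult x hb).tendsto_prod_tprod_nat

lemma qPochInf_self_ne {b : ℂ} (hb : ‖b‖ < 1) : qPochInf b b ≠ 0 := by
  have := tprod_one_add_ne_zero_of_summable (f := fun k : ℕ => -(b * b ^ k)) ?_ (qsummable b hb)
  · simpa [qPochInf, sub_eq_add_neg] using this
  · intro i
    have := one_sub_pow_ne hb i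
    rwa [pow_succ', sub_eq_add_neg] at this

lemma bdd_of_tendsto {u : ℕ → ℂ} {l : ℂ} (h : Tendsto u atTop (𝓝 l)) :
    ∃ C : ℝ, 0 ≤ C ∧ ∀ n, ‖u n‖ ≤ C := by
  obtain ⟨C, hC⟩ := h.norm.bddAbove_range
  refine ⟨C, (norm_nonneg _).trans (hC ⟨0, rfl⟩), fun n => hC ⟨n, rfl⟩⟩

lemma qPochInf_split {b : ℂ} (hb : ‖b‖ < 1) :
    qPochInf b b = qPochInf b (b ^ 2) * qPochInf (b ^ 2) (b ^ 2) := by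
  have hb2 : ‖b ^ 2‖ < 1 := by rw [norm_pow]; exact pow_lt_one₀ (norm_nonneg _) hb (by omega)
  have e1 : ∀ k : ℕ, 1 - b * (b ^ 2) ^ k = 1 - b * b ^ (2 * k) := fun k => by rw [pow_mul]
  have e2 : ∀ k : ℕ, 1 - b ^ 2 * (b ^ 2) ^ k = 1 - b * b ^ (2 * k + 1) := fun k => by
    rw [← pow_mul]; ring
  have h1 := qmult b hb2
  have h2 := qmult (b ^ 2) hb2
  simp only [e1] at h1
  simp only [e2] at h2
  unfold qPochInf
  simp only [e1, e2]
  exact (tprod_even_mul_odd (f := fun k => 1 - b * b ^ k) h1 h2).symm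

/-- The Bailey pair relation. -/
lemma bailey_pair {b : ℂ} (hb : ‖b‖ < 1) (n : ℕ) :
    2 * ∑ r ∈ Finset.range (n + 1),
        qPoch (b ^ 2) (b ^ 2) n * ((-1) ^ r * b ^ (r ^ 2) / (qPoch b b (n - r) * qPoch b b (n + r)))
      - qPoch (b ^ 2) (b ^ 2) n / (qPoch b b n * qPoch b b n) = 1 := by
  induction n with
  | zero => simp [qPoch]; norm_num
  | succ n ih =>
    have hne := qPoch_self_ne hb
    have key : ∀ R ≤ n + 1, ∑ r ∈ Finset.range R,
        (qPoch (b ^ 2) (b ^ 2) (n + 1) * ((-1) ^ r * b ^ (r ^ 2) /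
            (qPoch b b (n + 1 - r) * qPoch b b (n + 1 + r)))
          - qPoch (b ^ 2) (b ^ 2) n * ((-1) ^ r * b ^ (r ^ 2) /
            (qPoch b b (n - r) * qPoch b b (n + r))))
        = qPoch (b ^ 2) (b ^ 2) n * b ^ (n + 1) / (qPoch b b (n + 1) * qPoch b b n)
          - qPoch (b ^ 2) (b ^ 2) n * ((-1) ^ R * b ^ (R ^ 2) * b ^ (n + 1 - R)) /
            (qPoch b b (n + 1 - R) * qPoch b b (n + R)) := by
      intro R
      induction R with
      | zero => intro _; simp
      | succ R ihR =>
        intro hR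
        rw [Finset.sum_range_succ, ihR (by omega)]
        obtain ⟨j, rfl⟩ : ∃ j, n = R + j := ⟨n - R, by omega⟩
        have a1 : R + j + 1 - R = j + 1 := by omega
        have a2 : R + j - R = j := by omega
        have a3 : R + j + 1 - (R + 1) = j := by omega
        have a4 : R + j + 1 + R = (R + j + R) + 1 := by omega
        have a5 : R + j + (R + 1) = (R + j + R) + 1 := by omega
        rw [a1, a2, a3, a4, a5, qPoch_succ (b ^ 2), qPoch_self_succ b j,
          qPoch_self_succ b (R + j + R)]
        have n1 := hne j
        have n2 := hne (R + j + R)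
        have n3 := hne (R + j + 1)
        have n4 := hne (R + j)
        have n5 := one_sub_pow_ne hb j
        have n6 := one_sub_pow_ne hb (R + j + R)
        generalize qPoch b b j = p1 at *
        generalize qPoch b b (R + j + R) = p2 at *
        generalize qPoch b b (R + j + 1) = p3 at *
        generalize qPoch b b (R + j) = p4 at *
        generalize qPoch (b ^ 2) (b ^ 2) (R + j) = p5 at *
        have e1 : (b ^ 2) ^ (R + j) = (b ^ R * b ^ j) ^ 2 := by ring
        have e2 : b ^ (R + j + R + 1) = b ^ R * b ^ R * b ^ j * b := by ring
        have e3 : b ^ ((R + 1) ^ 2) = b ^ (R ^ 2) * b ^ R * b ^ R * b := by ring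
        have e4 : b ^ (R + j + 1) = b ^ R * b ^ j * b := by ring
        rw [e2] at n6
        rw [pow_succ] at n5
        rw [e1, e2, e3, e4, pow_succ b j, pow_succ (-1 : ℂ) R]
        generalize b ^ (R ^ 2) = s at *
        generalize b ^ R = x at *
        generalize b ^ j = y at *
        generalize (-1 : ℂ) ^ R = e at *
        clear ihR ih
        generalize hd5 : 1 - y * b = d5 at n5 ⊢
        generalize hd6 : 1 - x * x * y * b = d6 at n6 ⊢
        field_simp
        subst hd5 hd6
        ring
    have hk := key (n + 1) le_rfl
    rw [Finset.sum_sub_distrib] at hk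
    rw [Finset.sum_range_succ]
    have a4 : n + 1 + (n + 1) = (n + (n + 1)) + 1 := by omega
    have last : qPoch (b ^ 2) (b ^ 2) (n + 1) * ((-1) ^ (n + 1) * b ^ ((n + 1) ^ 2) /
            (qPoch b b (n + 1 - (n + 1)) * qPoch b b (n + 1 + (n + 1))))
        = qPoch (b ^ 2) (b ^ 2) n * ((-1) ^ (n + 1) * b ^ ((n + 1) ^ 2) * b ^ (n + 1 - (n + 1))) /
            (qPoch b b (n + 1 - (n + 1)) * qPoch b b (n + (n + 1))) := by
      rw [a4, qPoch_succ (b ^ 2), qPoch_self_succ b (n + (n + 1))]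
      have n6 := one_sub_pow_ne hb (n + (n + 1))
      have n2 := hne (n + (n + 1))
      have e1 : b ^ 2 * (b ^ 2) ^ n = b ^ (n + (n + 1) + 1) := by rw [← pow_succ', ← pow_mul]; ring
      rw [e1]
      simp only [Nat.sub_self, pow_zero]
      have : qPoch b b 0 = 1 := by simp [qPoch]
      rw [this]
      field_simp
    have z : qPoch (b ^ 2) (b ^ 2) (n + 1) / (qPoch b b (n + 1) * qPoch b b (n + 1))
        = qPoch (b ^ 2) (b ^ 2) n / (qPoch b b n * qPoch b b n)
          + 2 * (qPoch (b ^ 2) (b ^ 2) n * b ^ (n + 1) / (qPoch b b (n + 1) * qPoch b b n)) := by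
      rw [qPoch_succ (b ^ 2), qPoch_self_succ b n]
      have n5 := one_sub_pow_ne hb n
      have n1 := hne n
      have e1 : b ^ 2 * (b ^ 2) ^ n = (b ^ (n + 1)) ^ 2 := by rw [← pow_succ', ← pow_mul]; ring
      rw [e1]
      field_simp
      ring
    linear_combination ih + 2 * hk + 2 * last - z

noncomputable def al (b : ℂ) (r : ℕ) : ℂ := if r = 0 then 1 else 2 * ((-1) ^ r * b ^ (r ^ 2))

lemma al_norm {b : ℂ} (hb : ‖b‖ < 1) (r : ℕ) : ‖al b r‖ ≤ 2 * ‖b‖ ^ r := by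
  unfold al
  split_ifs with h
  · subst h; simp
  · simp only [norm_mul, norm_pow, norm_neg, norm_one, one_pow, one_mul, Complex.norm_ofNat]
    gcongr 2 * ?_
    exact pow_le_pow_of_le_one (norm_nonneg _) hb.le (Nat.le_self_pow (by norm_num) r)

lemma bailey_pair' {b : ℂ} (hb : ‖b‖ < 1) (n : ℕ) :
    ∑ r ∈ Finset.range (n + 1), al b r * ((qPoch b b (n - r))⁻¹ * (qPoch b b (n + r))⁻¹)
      = (qPoch (b ^ 2) (b ^ 2) n)⁻¹ := by
  have hb2 : ‖b ^ 2‖ < 1 := by rw [norm_pow]; exact pow_lt_one₀ (norm_nonneg _) hb (by omega)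
  have h := bailey_pair hb n
  have hn := qPoch_self_ne hb2 n
  rw [← Finset.mul_sum, Finset.sum_range_succ'] at h
  rw [Finset.sum_range_succ']
  simp only [al]
  rw [Finset.sum_congr rfl (g := fun r => 2 * ((-1) ^ (r+1) * b ^ ((r+1) ^ 2) / (qPoch b b (n - (r+1)) * qPoch b b (n + (r+1)))))
    (fun r _ => by rw [if_neg (by omega)]; rw [div_eq_mul_inv, mul_inv]; ring), ← Finset.mul_sum]
  apply mul_left_cancel₀ hn
  rw [mul_inv_cancel₀ hn]
  simp only [Nat.sub_zero, Nat.add_zero, pow_zero, zero_pow two_ne_zero, if_true] at h ⊢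
  have e : qPoch (b ^ 2) (b ^ 2) n * (1 / (qPoch b b n * qPoch b b n))
      = qPoch (b ^ 2) (b ^ 2) n * ((qPoch b b n)⁻¹ * (qPoch b b n)⁻¹) := by
    rw [one_div, mul_inv]
  have e' : qPoch (b ^ 2) (b ^ 2) n / (qPoch b b n * qPoch b b n)
      = qPoch (b ^ 2) (b ^ 2) n * ((qPoch b b n)⁻¹ * (qPoch b b n)⁻¹) := by
    rw [div_eq_mul_inv, mul_inv]
  linear_combination h - 2 * e + e'

lemma theta {b : ℂ} (hb : ‖b‖ < 1) :
    ∑' r, al b r = qPochInf b b ^ 2 * (qPochInf (b ^ 2) (b ^ 2))⁻¹ := by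
  have hb2 : ‖b ^ 2‖ < 1 := by rw [norm_pow]; exact pow_lt_one₀ (norm_nonneg _) hb (by omega)
  have hP := (qPoch_tendsto b hb).inv₀ (qPochInf_self_ne hb)
  have hP2 := (qPoch_tendsto (b ^ 2) hb2).inv₀ (qPochInf_self_ne hb2)
  obtain ⟨C, hC0, hC⟩ := bdd_of_tendsto hP
  have hlim : Tendsto (fun n : ℕ => ∑' r, if r ≤ n then
      al b r * ((qPoch b b (n - r))⁻¹ * (qPoch b b (n + r))⁻¹) else 0) atTop
      (𝓝 (∑' r, al b r * ((qPochInf b b)⁻¹ * (qPochInf b b)⁻¹))) := by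
    refine tendsto_tsum_of_dominated_convergence (bound := fun r => (2 * ‖b‖ ^ r) * (C * C)) ?_ ?_ ?_
    · exact ((summable_geometric_of_lt_one (norm_nonneg _) hb).mul_left _).mul_right _
    · intro r
      have h1 : Tendsto (fun n : ℕ =>
          al b r * ((qPoch b b (n - r))⁻¹ * (qPoch b b (n + r))⁻¹)) atTop
          (𝓝 (al b r * ((qPochInf b b)⁻¹ * (qPochInf b b)⁻¹))) :=
        ((hP.comp (tendsto_sub_atTop_nat r)).mul (hP.comp (tendsto_add_atTop_nat r))).const_mul _
      refine h1.congr' ?_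
      filter_upwards [eventually_ge_atTop r] with n hn
      rw [if_pos hn]
    · refine Eventually.of_forall fun n r => ?_
      split_ifs
      · rw [norm_mul, norm_mul]
        gcongr
        · exact al_norm hb r
        · exact hC _
        · exact hC _
      · rw [norm_zero]; positivity
  have hfin : ∀ n : ℕ, (∑' r, if r ≤ n then
      al b r * ((qPoch b b (n - r))⁻¹ * (qPoch b b (n + r))⁻¹) else 0)
      = (qPoch (b ^ 2) (b ^ 2) n)⁻¹ := by
    intro n
    rw [← bailey_pair' hb n, tsum_eq_sum (s := Finset.range (n + 1))]
    · refine Finset.sum_congr rfl fun r hr => ?_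
      rw [if_pos (by simpa [Nat.lt_succ_iff] using hr)]
    · intro r hr
      rw [if_neg (by simpa [Nat.lt_succ_iff] using hr)]
  simp only [hfin] at hlim
  have := tendsto_nhds_unique hlim hP2
  rw [tsum_mul_right] at this
  rw [← this]
  have := qPochInf_self_ne hb
  field_simp

/-- Summand of the (limiting) `q`-Gauss sum. -/
noncomputable def tt (q : ℂ) (r m : ℕ) : ℂ :=
  qPoch (-q) (q ^ 2) (r + m) * q ^ (m ^ 2 + 2 * r * m) *
    ((qPoch (q ^ 2) (q ^ 2) m)⁻¹ * (qPoch (q ^ 2) (q ^ 2) (2 * r + m))⁻¹)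

lemma tt_bound {q : ℂ} (hq : ‖q‖ < 1) : ∃ C : ℝ, 0 ≤ C ∧ ∀ r m, ‖tt q r m‖ ≤ C * ‖q‖ ^ m := by
  have hb : ‖q ^ 2‖ < 1 := by rw [norm_pow]; exact pow_lt_one₀ (norm_nonneg _) hq (by omega)
  obtain ⟨C, hC0, hC⟩ := bdd_of_tendsto ((qPoch_tendsto (q ^ 2) hb).inv₀ (qPochInf_self_ne hb))
  obtain ⟨D, hD0, hD⟩ := bdd_of_tendsto (qPoch_tendsto (-q) hb)
  refine ⟨D * (C * C), by positivity, fun r m => ?_⟩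
  unfold tt
  rw [norm_mul, norm_mul, norm_mul, norm_pow]
  have hpow : ‖q‖ ^ (m ^ 2 + 2 * r * m) ≤ ‖q‖ ^ m := by
    apply pow_le_pow_of_le_one (norm_nonneg _) hq.le
    exact (Nat.le_self_pow (two_ne_zero) m).trans (Nat.le_add_right _ _)
  calc _ ≤ D * ‖q‖ ^ m * (C * C) := by
        gcongr ?_ * ?_ * (?_ * ?_)
        · exact hD _
        · exact hC _
        · exact hC _
    _ = _ := by ring

lemma tt_summable {q : ℂ} (hq : ‖q‖ < 1) (r : ℕ) : Summable (tt q r) := by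
  obtain ⟨C, hC0, hC⟩ := tt_bound hq
  exact Summable.of_norm_bounded
    ((summable_geometric_of_lt_one (norm_nonneg _) hq).mul_left C) (hC r)

lemma tt_tele {q : ℂ} (hq : ‖q‖ < 1) (r M : ℕ) :
    ∑ m ∈ Finset.range M, (tt q r m - tt q (r + 1) m) =
      tt q r M * ((1 - q ^ (2 * M)) * (-1 + (q ^ (4 * r + 2) - q ^ (2 * r + 1)) * q ^ (2 * M)) /
        (1 - q ^ (2 * M + 4 * r + 2))) := by
  have hb : ‖q ^ 2‖ < 1 := by rw [norm_pow]; exact pow_lt_one₀ (norm_nonneg _) hq (by omega)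
  induction M with
  | zero => simp
  | succ m ih =>
    rw [Finset.sum_range_succ, ih]
    unfold tt
    have a1 : r + 1 + m = r + m + 1 := by omega
    have a2 : 2 * (r + 1) + m = 2 * r + m + 1 + 1 := by omega
    have a3 : r + (m + 1) = r + m + 1 := by omega
    have a4 : 2 * r + (m + 1) = 2 * r + m + 1 := by omega
    rw [a1, a2, a3, a4, qPoch_succ (-q), qPoch_self_succ _ m, qPoch_self_succ _ (2 * r + m + 1),
      qPoch_self_succ _ (2 * r + m)]
    have n1 := qPoch_self_ne hb m
    have n2 := qPoch_self_ne hb (2 * r + m)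
    have n3 := one_sub_pow_ne hb m
    have n4 := one_sub_pow_ne hb (2 * r + m)
    have n5 := one_sub_pow_ne hb (2 * r + m + 1)
    generalize qPoch (q ^ 2) (q ^ 2) m = p1 at *
    generalize qPoch (q ^ 2) (q ^ 2) (2 * r + m) = p2 at *
    generalize qPoch (-q) (q ^ 2) (r + m) = p3 at *
    have e1 : (q ^ 2) ^ (m + 1) = q ^ (2 * m) * q ^ 2 := by ring
    have e2 : (q ^ 2) ^ (2 * r + m + 1) = (q ^ (2 * r)) ^ 2 * q ^ (2 * m) * q ^ 2 := by ring
    have e3 : (q ^ 2) ^ (2 * r + m + 1 + 1) = (q ^ (2 * r)) ^ 2 * q ^ (2 * m) * q ^ 4 := by ring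
    have e4 : (q ^ 2) ^ (r + m) = q ^ (2 * r) * q ^ (2 * m) := by ring
    have e5 : q ^ (2 * (m + 1)) = q ^ (2 * m) * q ^ 2 := by ring
    have e6 : q ^ (2 * (m + 1) + 4 * r + 2) = (q ^ (2 * r)) ^ 2 * q ^ (2 * m) * q ^ 4 := by ring
    have e7 : q ^ (2 * m + 4 * r + 2) = (q ^ (2 * r)) ^ 2 * q ^ (2 * m) * q ^ 2 := by ring
    have e8 : q ^ (4 * r + 2) = (q ^ (2 * r)) ^ 2 * q ^ 2 := by ring
    have e9 : q ^ (2 * r + 1) = q ^ (2 * r) * q := by ring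
    have e10 : q ^ (m ^ 2 + 2 * (r + 1) * m) = q ^ (m ^ 2 + 2 * r * m) * q ^ (2 * m) := by ring
    have e11 : q ^ ((m + 1) ^ 2 + 2 * r * (m + 1)) =
      q ^ (m ^ 2 + 2 * r * m) * (q ^ (2 * m) * q ^ (2 * r) * q) := by ring
    rw [e1] at n3
    rw [e2] at n4
    rw [e3] at n5
    rw [e1, e2, e3, e4, e5, e6, e7, e8, e9, e10, e11]
    generalize q ^ (m ^ 2 + 2 * r * m) = s at *
    generalize q ^ (2 * m) = x at *
    generalize q ^ (2 * r) = y at *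
    generalize hd3 : 1 - x * q ^ 2 = d3 at n3 ⊢
    generalize hd4 : 1 - y ^ 2 * x * q ^ 2 = d4 at n4 ⊢
    generalize hd5 : 1 - y ^ 2 * x * q ^ 4 = d5 at n5 ⊢
    field_simp
    subst hd3 hd4 hd5
    ring

lemma tt_step {q : ℂ} (hq : ‖q‖ < 1) (r : ℕ) : ∑' m, tt q r m = ∑' m, tt q (r + 1) m := by
  have h1 := ((tt_summable hq r).sub (tt_summable hq (r + 1))).hasSum.tendsto_sum_nat
  simp only [tt_tele hq] at h1
  have hb : ‖q ^ 2‖ < 1 := by rw [norm_pow]; exact pow_lt_one₀ (norm_nonneg _) hq (by omega)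
  have hx : Tendsto (fun M : ℕ => q ^ (2 * M)) atTop (𝓝 0) := by
    simpa [pow_mul] using tendsto_pow_atTop_nhds_zero_of_norm_lt_one hb
  have hd : Tendsto (fun M : ℕ => 1 - q ^ (2 * M + 4 * r + 2)) atTop (𝓝 1) := by
    simpa [pow_add] using ((hx.mul_const (q ^ (4 * r))).mul_const (q ^ 2)).const_sub 1
  have h2 := (tt_summable hq r).tendsto_atTop_zero.mul
    (((hx.const_sub 1).mul ((hx.const_mul (q ^ (4 * r + 2) - q ^ (2 * r + 1))).const_add (-1))).div
      hd one_ne_zero)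
  rw [zero_mul] at h2
  have h3 := tendsto_nhds_unique h1 h2
  rw [(tt_summable hq r).tsum_sub (tt_summable hq (r + 1))] at h3
  exact sub_eq_zero.mp h3

lemma tt_sum {q : ℂ} (hq : ‖q‖ < 1) (r : ℕ) :
    ∑' m, tt q r m = qPochInf (-q) (q ^ 2) * (qPochInf (q ^ 2) (q ^ 2))⁻¹ := by
  have hb : ‖q ^ 2‖ < 1 := by rw [norm_pow]; exact pow_lt_one₀ (norm_nonneg _) hq (by omega)
  have hconst : ∀ r, ∑' m, tt q r m = ∑' m, tt q 0 m := by
    intro r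
    induction r with
    | zero => rfl
    | succ r ih => rw [← tt_step hq, ih]
  obtain ⟨C, hC0, hC⟩ := tt_bound hq
  have hP := (qPoch_tendsto (q ^ 2) hb).inv₀ (qPochInf_self_ne hb)
  have hA := qPoch_tendsto (-q) hb
  have hlim : Tendsto (fun r : ℕ => ∑' m, tt q r m) atTop
      (𝓝 (∑' m : ℕ, if m = 0 then qPochInf (-q) (q ^ 2) * (qPochInf (q ^ 2) (q ^ 2))⁻¹ else 0)) := by
    refine tendsto_tsum_of_dominated_convergence (bound := fun m => C * ‖q‖ ^ m) ?_ ?_ ?_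
    · exact (summable_geometric_of_lt_one (norm_nonneg _) hq).mul_left C
    · intro m
      have t2 : Tendsto (fun r : ℕ => 2 * r + m) atTop atTop :=
        tendsto_atTop_mono (fun r => by show r ≤ _; omega) tendsto_id
      have l1 := hA.comp (tendsto_add_atTop_nat m)
      have l2 := (hP.comp t2).const_mul ((qPoch (q ^ 2) (q ^ 2) m)⁻¹)
      have l3 : Tendsto (fun r : ℕ => q ^ (m ^ 2 + 2 * r * m)) atTop
          (𝓝 (if m = 0 then 1 else 0)) := by
        split_ifs with h
        · subst h; simp
        · have t3 : Tendsto (fun r : ℕ => m ^ 2 + 2 * r * m) atTop atTop :=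
            tendsto_atTop_mono (fun r => by
              have : 1 ≤ m := by omega
              show r ≤ _
              nlinarith) tendsto_id
          exact (tendsto_pow_atTop_nhds_zero_of_norm_lt_one hq).comp t3
      have l4 := (l1.mul l3).mul l2
      have e : (if m = 0 then qPochInf (-q) (q ^ 2) * (qPochInf (q ^ 2) (q ^ 2))⁻¹ else 0)
          = (qPochInf (-q) (q ^ 2) * if m = 0 then 1 else 0) *
            ((qPoch (q ^ 2) (q ^ 2) m)⁻¹ * (qPochInf (q ^ 2) (q ^ 2))⁻¹) := by
        split_ifs with h
        · subst h; simp [qPoch]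
        · simp
      rw [e]
      exact l4
    · exact Eventually.of_forall fun r m => hC r m
  simp only [hconst] at hlim
  rw [hconst, tendsto_nhds_unique tendsto_const_nhds hlim, tsum_ite_eq]

/-- Identity (33) (Slater (25)): for `|q| < 1`,
`Σ_{n≥0} q^{n^2} (-q;q^2)_n / (q^4;q^4)_n
  = ((-q;q^2)_∞/(q^2;q^2)_∞) (q^3;q^6)_∞^2 (q^6;q^6)_∞`. -/
theorem rr_33 (q : ℂ) (hq : ‖q‖ < 1) :
    ∑' n : ℕ, q ^ (n ^ 2) * qPoch (-q) (q ^ 2) n / qPoch (q ^ 4) (q ^ 4) n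
      = qPochInf (-q) (q ^ 2) / qPochInf (q ^ 2) (q ^ 2) *
          (qPochInf (q ^ 3) (q ^ 6) ^ 2 * qPochInf (q ^ 6) (q ^ 6)) := by
  have hb : ‖q ^ 2‖ < 1 := by rw [norm_pow]; exact pow_lt_one₀ (norm_nonneg _) hq (by omega)
  have hb3 : ‖q ^ 3‖ < 1 := by rw [norm_pow]; exact pow_lt_one₀ (norm_nonneg _) hq (by omega)
  have hb6 : ‖q ^ 6‖ < 1 := by rw [norm_pow]; exact pow_lt_one₀ (norm_nonneg _) hq (by omega)
  obtain ⟨C, hC0, hC⟩ := tt_bound hq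
  let f : ℕ × ℕ → ℂ := fun p => al (q ^ 3) p.1 * tt q p.1 p.2
  have hf : Summable f := by
    refine Summable.of_norm_bounded (g := fun p : ℕ × ℕ => (2 * ‖q ^ 3‖ ^ p.1) * (C * ‖q‖ ^ p.2)) ?_ ?_
    · exact Summable.mul_of_nonneg
        ((summable_geometric_of_lt_one (norm_nonneg _) hb3).mul_left 2)
        ((summable_geometric_of_lt_one (norm_nonneg _) hq).mul_left C)
        (fun _ => by positivity) (fun _ => by positivity)
    · intro p
      simp only [f, norm_mul]
      gcongr
      · exact al_norm hb3 _
      · exact hC _ _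
  have hterm : ∀ n : ℕ, q ^ (n ^ 2) * qPoch (-q) (q ^ 2) n / qPoch (q ^ 4) (q ^ 4) n
      = ∑ p ∈ Finset.HasAntidiagonal.antidiagonal n, f p := by
    intro n
    have e4 : q ^ 4 = (q ^ 2) ^ 2 := by ring
    rw [e4, div_eq_mul_inv, ← bailey_pair' hb n, Finset.mul_sum,
      Finset.Nat.sum_antidiagonal_eq_sum_range_succ_mk]
    refine Finset.sum_congr rfl fun r hr => ?_
    obtain ⟨m, rfl⟩ : ∃ m, n = r + m := ⟨n - r, by simp at hr; omega⟩
    have a1 : r + m - r = m := by omega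
    have a2 : r + m + r = 2 * r + m := by omega
    simp only [f, tt, a1, a2]
    have hal : q ^ ((r + m) ^ 2) * al (q ^ 2) r
        = al (q ^ 3) r * q ^ (m ^ 2 + 2 * r * m) := by
      unfold al
      split_ifs with h
      · subst h; simp
      · rw [← pow_mul, ← pow_mul]; ring
    linear_combination (qPoch (-q) (q ^ 2) (r + m) * ((qPoch (q ^ 2) (q ^ 2) m)⁻¹ *
      (qPoch (q ^ 2) (q ^ 2) (2 * r + m))⁻¹)) * hal
  have hsig : ∑' n : ℕ, ∑ p ∈ Finset.HasAntidiagonal.antidiagonal n, f p = ∑' p, f p := by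
    rw [← Finset.HasAntidiagonal.sigmaAntidiagonalEquivProd.tsum_eq f]
    have hs := (Finset.HasAntidiagonal.sigmaAntidiagonalEquivProd (A := ℕ)).summable_iff.mpr hf
    refine Eq.trans ?_ (Summable.tsum_sigma' (fun n => (hasSum_fintype _).summable) hs).symm
    refine tsum_congr fun n => ?_
    rw [tsum_fintype, ← Finset.sum_coe_sort]
    rfl
  simp only [hterm]
  rw [hsig, hf.tsum_prod]
  simp only [f, tsum_mul_left, tt_sum hq, tsum_mul_right]
  rw [theta hb3, qPochInf_split hb3]
  have e6 : (q ^ 3) ^ 2 = q ^ 6 := by ring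
  rw [e6]
  have := qPochInf_self_ne hb6
  field_simp
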